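/- The following 20-point positive cubature rule of index 4 with rational data holds on the 4-dimensional simplex: for every homogeneous polynomial f of degree 4 in 5 variables, 4! · ∫_{T^4} f(x_1,x_2,x_3,x_4, 1−x_1−x_2−x_3−x_4) dx = (2/21)·avg f over the 10 distinct coordinate permutations of (1/2, 1/2, 0, 0, 0) + (32/63)·avg f over the 5 distinct coordinate permutations of (1/4, 1/4, 1/4, 1/4, 0) + (25/63)·avg f over the 5 distinct coordinate permutations of (3/5, 1/10, 1/10, 1/10, 1/10), where avg denotes the arithmetic mean of the values of f over the listed points. -/

import Mathlib

open MeasureTheory Finset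

/-- The standard simplex `T^d` in `ℝ^d`. -/
def Td (d : ℕ) : Set (Fin d → ℝ) :=
  {x | (∀ i, 0 ≤ x i) ∧ ∑ i, x i ≤ 1}

/-- The weight function `W_γ(x) = (x_1 ⋯ x_d (1 - |x|₁))^γ` on `T^d`. -/
noncomputable def Wg (d : ℕ) (γ : ℝ) (x : Fin d → ℝ) : ℝ :=
  ((∏ i, x i) * (1 - ∑ i, x i)) ^ γ

/-- The normalization constant `w_γ = Γ((d+1)(γ+1)) / Γ(γ+1)^(d+1)`. -/
noncomputable def wg (d : ℕ) (γ : ℝ) : ℝ :=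
  Real.Gamma ((d + 1) * (γ + 1)) / (Real.Gamma (γ + 1)) ^ (d + 1)

/-- Homogeneous coordinates: `x ↦ (x, 1 - |x|₁) ∈ 𝒯^{d+1}`. -/
noncomputable def lift (d : ℕ) (x : Fin d → ℝ) : Fin (d + 1) → ℝ :=
  Fin.snoc x (1 - ∑ i, x i)

/-- The average of `f` over the set of distinct coordinate permutations of `y`. -/
noncomputable def orbitAvg (d : ℕ) (y : Fin (d + 1) → ℝ) (f : (Fin (d + 1) → ℝ) → ℝ) : ℝ :=
  ((Finset.image (fun σ : Equiv.Perm (Fin (d + 1)) => y ∘ σ) Finset.univ).card : ℝ)⁻¹ *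
    ∑ z ∈ Finset.image (fun σ : Equiv.Perm (Fin (d + 1)) => y ∘ σ) Finset.univ, f z

/-- The simplex `{x | 0 ≤ x, ∑ x ≤ s}` of size `s` in `ℝ^d`. -/
def scaledSimplex (d : ℕ) (s : ℝ) : Set (Fin d → ℝ) :=
  {x | (∀ i, 0 ≤ x i) ∧ ∑ i, x i ≤ s}

lemma isClosed_scaledSimplex (d : ℕ) (s : ℝ) : IsClosed (scaledSimplex d s) := by
  have : scaledSimplex d s = (⋂ i, {x | 0 ≤ x i}) ∩ {x | ∑ i, x i ≤ s} := by
    ext x; simp [scaledSimplex]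
  rw [this]
  exact (isClosed_iInter fun i => isClosed_le (by fun_prop) (by fun_prop)).inter
    (isClosed_le (by fun_prop) (by fun_prop))

lemma isCompact_scaledSimplex (d : ℕ) (s : ℝ) : IsCompact (scaledSimplex d s) := by
  refine (isCompact_Icc (a := fun _ : Fin d => (0 : ℝ)) (b := fun _ => s)).of_isClosed_subset
    (isClosed_scaledSimplex d s) fun x hx => ⟨hx.1, fun i => ?_⟩
  exact (single_le_sum (f := x) (fun j _ => hx.1 j) (mem_univ i)).trans hx.2

lemma cons_mem_scaledSimplex {d : ℕ} {s t : ℝ} {y : Fin d → ℝ} :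
    (Fin.cons t y : Fin (d + 1) → ℝ) ∈ scaledSimplex (d + 1) s ↔
      0 ≤ t ∧ y ∈ scaledSimplex d (s - t) := by
  simp only [scaledSimplex, Set.mem_ofPred_eq, Fin.forall_fin_succ, Fin.cons_zero, Fin.cons_succ,
    Fin.sum_univ_succ, and_assoc, le_sub_iff_add_le']

lemma intervalIntegral_pow_mul_sub_pow (s : ℝ) (a b : ℕ) :
    ∫ t in (0 : ℝ)..s, t ^ a * (s - t) ^ b =
      (a.factorial * b.factorial : ℝ) / (a + b + 1).factorial * s ^ (a + b + 1) := by
  induction a generalizing b with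
  | zero =>
    have h := intervalIntegral.integral_comp_sub_left (fun t : ℝ => t ^ b) s (a := 0) (b := s)
    simp only [pow_zero, one_mul, h, integral_pow, Nat.factorial_succ, zero_add]
    have : (b.factorial : ℝ) ≠ 0 := by positivity
    push_cast
    simp
    field_simp
  | succ a ih =>
    have h := intervalIntegral.integral_mul_deriv_eq_deriv_mul (a := 0) (b := s)
      (u := fun t : ℝ => t ^ (a + 1)) (u' := fun t => (a + 1) * t ^ a)
      (v := fun t => -((s - t) ^ (b + 1) / (b + 1))) (v' := fun t => (s - t) ^ b)
      (fun t _ => by simpa using hasDerivAt_pow (a + 1) t)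
      (fun t _ => by
        have h := ((((hasDerivAt_id t).const_sub s).pow (b + 1)).div_const (b + 1 : ℝ)).neg
        refine h.congr_deriv ?_
        have : (b + 1 : ℝ) ≠ 0 := by positivity
        simp
        field_simp)
      (Continuous.intervalIntegrable (by fun_prop) _ _)
      (Continuous.intervalIntegrable (by fun_prop) _ _)
    have h' : ∀ t : ℝ, (a + 1) * t ^ a * -((s - t) ^ (b + 1) / (b + 1)) =
        -((a + 1) / (b + 1)) * (t ^ a * (s - t) ^ (b + 1)) := fun t => by ring
    simp only [h', intervalIntegral.integral_const_mul, ih (b + 1)] at h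
    rw [h, show a + (b + 1) + 1 = a + 1 + b + 1 by ring]
    simp only [Nat.factorial_succ a, Nat.factorial_succ b]
    have : (b + 1 : ℝ) ≠ 0 := by positivity
    push_cast
    simp
    field_simp

/-- Dirichlet's integral with natural exponents. -/
lemma integral_scaledSimplex_prod_pow (d : ℕ) {s : ℝ} (hs : 0 ≤ s) (a : Fin d → ℕ) (b : ℕ) :
    ∫ x in scaledSimplex d s, (∏ i, x i ^ a i) * (s - ∑ i, x i) ^ b =
      ((∏ i, (a i).factorial : ℝ) * b.factorial) / (d + ∑ i, a i + b).factorial *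
        s ^ (d + ∑ i, a i + b) := by
  induction d generalizing s with
  | zero =>
    have : scaledSimplex 0 s = Set.univ := by ext; simp [scaledSimplex, hs]
    have hb : (b.factorial : ℝ) ≠ 0 := by positivity
    simp [this, hb, Measure.real, volume_pi]
  | succ d ih =>
    set F : (Fin (d + 1) → ℝ) → ℝ := (scaledSimplex (d + 1) s).indicator
      fun x => (∏ i, x i ^ a i) * (s - ∑ i, x i) ^ b with hF
    have hFint : Integrable F := by
      rw [hF, integrable_indicator_iff (isClosed_scaledSimplex _ _).measurableSet]
      exact ContinuousOn.integrableOn_compact (isCompact_scaledSimplex _ _) (by fun_prop)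
    have hmp := (volume_preserving_piFinSuccAbove (fun _ : Fin (d + 1) => ℝ) 0).symm
    have hslice (t : ℝ) : ∫ y : Fin d → ℝ, F (Fin.cons t y) =
        (Set.Icc 0 s).indicator (fun t => ((∏ i : Fin d, (a i.succ).factorial : ℝ) * b.factorial) /
          (d + ∑ i : Fin d, a i.succ + b).factorial *
          (t ^ a 0 * (s - t) ^ (d + ∑ i : Fin d, a i.succ + b))) t := by
      by_cases ht : t ∈ Set.Icc 0 s
      · have h (y : Fin d → ℝ) : F (Fin.cons t y) = (scaledSimplex d (s - t)).indicator
            (fun y => t ^ a 0 * ((∏ i, y i ^ a i.succ) * (s - t - ∑ i, y i) ^ b)) y := by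
          classical
          simp only [hF, Set.indicator_apply, cons_mem_scaledSimplex, ht.1, true_and,
            Fin.prod_univ_succ, Fin.sum_univ_succ, Fin.cons_zero, Fin.cons_succ, mul_assoc,
            sub_sub]
        simp only [h]
        rw [integral_indicator (isClosed_scaledSimplex _ _).measurableSet, integral_const_mul,
          ih (sub_nonneg.2 ht.2), Set.indicator_of_mem ht]
        ring
      · have h (y : Fin d → ℝ) : F (Fin.cons t y) = 0 := by
          refine Set.indicator_of_notMem (fun hy => ht ?_) _
          obtain ⟨h0, hy⟩ := cons_mem_scaledSimplex.1 hy
          exact ⟨h0, sub_nonneg.1 ((sum_nonneg fun i _ => hy.1 i).trans hy.2)⟩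
        simp [h, Set.indicator_of_notMem ht]
    have hcons (p : ℝ × (Fin d → ℝ)) :
        (MeasurableEquiv.piFinSuccAbove (fun _ : Fin (d + 1) => ℝ) 0).symm p =
          Fin.cons p.1 p.2 := by
      simp [MeasurableEquiv.piFinSuccAbove, Fin.insertNthEquiv]
    have hFint' := (hmp.integrable_comp_emb (MeasurableEquiv.measurableEmbedding _)).2 hFint
    rw [← integral_indicator (isClosed_scaledSimplex _ _).measurableSet, ← hF,
      ← hmp.integral_comp' F]
    rw [Measure.volume_eq_prod] at hFint' ⊢
    refine (integral_prod _ hFint').trans ?_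
    simp only [Function.comp_apply, hcons, hslice]
    rw [integral_indicator measurableSet_Icc, integral_const_mul, integral_Icc_eq_integral_Ioc,
      ← intervalIntegral.integral_of_le hs, intervalIntegral_pow_mul_sub_pow]
    simp only [Fin.prod_univ_succ, Fin.sum_univ_succ]
    rw [show a 0 + (d + ∑ i : Fin d, a i.succ + b) + 1 = d + 1 + (a 0 + ∑ i : Fin d, a i.succ) + b
      by ring]
    have h : ((d + ∑ i : Fin d, a i.succ + b).factorial : ℝ) ≠ 0 := by positivity
    field_simp

lemma integral_Td_prod_lift_pow (d : ℕ) (m : Fin (d + 1) → ℕ) :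
    ∫ x in Td d, ∏ i, lift d x i ^ m i =
      (∏ i, (m i).factorial : ℝ) / (d + ∑ i, m i).factorial := by
  have h := integral_scaledSimplex_prod_pow d zero_le_one (fun i => m i.castSucc) (m (Fin.last d))
  rw [show scaledSimplex d 1 = Td d from rfl] at h
  simpa [lift, Fin.prod_univ_castSucc, Fin.sum_univ_castSucc, add_assoc] using h

lemma continuous_lift (d : ℕ) : Continuous (lift d) := by
  unfold lift
  fun_prop

lemma integral_Td_eval_lift (d : ℕ) (f : MvPolynomial (Fin (d + 1)) ℝ) :
    ∫ x in Td d, MvPolynomial.eval (lift d x) f =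
      ∑ m ∈ f.support, f.coeff m *
        ((∏ i, (m i).factorial : ℝ) / (d + ∑ i, m i).factorial) := by
  simp only [MvPolynomial.eval_eq']
  rw [integral_finsetSum]
  · simp only [integral_const_mul, integral_Td_prod_lift_pow]
  · intro m _
    have := continuous_lift d
    exact ContinuousOn.integrableOn_compact (isCompact_scaledSimplex d 1) (by fun_prop)

lemma orbitAvg_ite_val_lt {d k : ℕ} (hk : k ≤ d + 1) {a b : ℝ} (hab : a ≠ b)
    (f : (Fin (d + 1) → ℝ) → ℝ) :
    orbitAvg d (fun i => if (i : ℕ) < k then a else b) f =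
      ((d + 1).choose k : ℝ)⁻¹ * ∑ s ∈ powersetCard k (univ : Finset (Fin (d + 1))),
        f (fun i => if i ∈ s then a else b) := by
  have hcard : #{i : Fin (d + 1) | (i : ℕ) < k} = k := by
    simp [Fin.card_filter_val_lt, hk]
  have hinj : Function.Injective fun (s : Finset (Fin (d + 1))) i => if i ∈ s then a else b := by
    intro s t hst
    ext i
    have := congrFun hst i
    by_cases hs : i ∈ s <;> by_cases ht : i ∈ t <;> simp_all [hab.symm]
  have himage : image (fun σ : Equiv.Perm (Fin (d + 1)) =>
        (fun i : Fin (d + 1) => if (i : ℕ) < k then a else b) ∘ σ) univ =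
      image (fun (s : Finset (Fin (d + 1))) i => if i ∈ s then a else b)
        (powersetCard k univ) := by
    ext z
    simp only [mem_image, mem_univ, true_and, mem_powersetCard_univ]
    constructor
    · rintro ⟨σ, rfl⟩
      refine ⟨({i : Fin (d + 1) | (i : ℕ) < k} : Finset _).map σ.symm.toEmbedding,
        by rw [card_map, hcard], ?_⟩
      ext i
      simp [mem_map_equiv]
    · rintro ⟨s, hs, rfl⟩
      have e : {i // i ∈ s} ≃ {i : Fin (d + 1) // (i : ℕ) < k} :=
        Fintype.equivOfCardEq (by rw [Fintype.card_coe, hs, Fintype.card_subtype, hcard])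
      refine ⟨e.extendSubtype, ?_⟩
      ext i
      by_cases hi : i ∈ s
      · simp [hi, e.extendSubtype_mem i hi]
      · simp [hi, e.extendSubtype_not_mem i hi]
  rw [orbitAvg, himage, card_image_of_injective _ hinj, sum_image hinj.injOn]
  simp

lemma orbitAvg_eval_ite_val_lt {d k : ℕ} (hk : k ≤ d + 1) {a b : ℝ} (hab : a ≠ b)
    (f : MvPolynomial (Fin (d + 1)) ℝ) :
    orbitAvg d (fun i => if (i : ℕ) < k then a else b) (fun z => MvPolynomial.eval z f) =
      ∑ m ∈ f.support, f.coeff m * (((d + 1).choose k : ℝ)⁻¹ *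
        ∑ s ∈ powersetCard k (univ : Finset (Fin (d + 1))),
          ∏ i, (if i ∈ s then a else b) ^ m i) := by
  simp only [orbitAvg_ite_val_lt hk hab, MvPolynomial.eval_eq']
  rw [sum_comm, mul_sum]
  refine sum_congr rfl fun m _ => ?_
  rw [← mul_sum]
  ring

lemma prod_ite_mul_pow {ι R : Type*} [Fintype ι] [DecidableEq ι] [CommSemiring R] (c a b : R)
    (s : Finset ι) (m : ι → ℕ) :
    ∏ i, (if i ∈ s then c * a else c * b) ^ m i =
      c ^ (∑ i, m i) * ∏ i, (if i ∈ s then a else b) ^ m i := by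
  simp only [← mul_ite, mul_pow, prod_mul_distrib, prod_pow_eq_pow_sum]

lemma cubature_moments_nat : ∀ m ∈ Finset.Nat.antidiagonalTuple 5 4,
    75 * ∏ i, (m i).factorial =
      75 * ∑ s ∈ powersetCard 2 (univ : Finset (Fin 5)), ∏ i, (if i ∈ s then 1 else 0) ^ m i
      + 50 * ∑ s ∈ powersetCard 4 (univ : Finset (Fin 5)), ∏ i, (if i ∈ s then 1 else 0) ^ m i
      + ∑ s ∈ powersetCard 1 (univ : Finset (Fin 5)), ∏ i, (if i ∈ s then 6 else 1) ^ m i := by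
  decide +kernel

/-- A 20-point positive cubature rule of index `4` with rational data on `T^4`. -/
theorem cubature_T4_index_four_rational :
    ∀ f : MvPolynomial (Fin 5) ℝ, f.IsHomogeneous 4 →
      (Nat.factorial 4 : ℝ) * ∫ x in Td 4, MvPolynomial.eval (lift 4 x) f
        = (2 / 21) * orbitAvg 4 (fun i => if (i : ℕ) < 2 then 1 / 2 else 0)
              (fun z => MvPolynomial.eval z f)
          + (32 / 63) * orbitAvg 4 (fun i => if (i : ℕ) < 4 then 1 / 4 else 0)
              (fun z => MvPolynomial.eval z f)
          + (25 / 63) * orbitAvg 4 (fun i => if (i : ℕ) = 0 then 3 / 5 else 1 / 10)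
              (fun z => MvPolynomial.eval z f) := by
  intro f hf
  have h3 : (fun i : Fin 5 => if (i : ℕ) = 0 then (3 / 5 : ℝ) else 1 / 10) =
      fun i : Fin 5 => if (i : ℕ) < 1 then 3 / 5 else 1 / 10 := by
    simp only [Nat.lt_one_iff]
  rw [h3, integral_Td_eval_lift, orbitAvg_eval_ite_val_lt (by norm_num) (by norm_num),
    orbitAvg_eval_ite_val_lt (by norm_num) (by norm_num),
    orbitAvg_eval_ite_val_lt (by norm_num) (by norm_num)]
  simp only [mul_sum (s := f.support), ← sum_add_distrib]
  refine sum_congr rfl fun m hm => ?_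
  have hdeg : ∑ i, m i = 4 := by
    rw [← Finsupp.degree_eq_sum, Finsupp.degree_eq_weight_one]
    exact hf (MvPolynomial.mem_support_iff.1 hm)
  have hmom := congrArg (Nat.cast : ℕ → ℝ)
    (cubature_moments_nat m (Finset.Nat.mem_antidiagonalTuple.2 hdeg))
  push_cast at hmom
  have h1 (s : Finset (Fin 5)) := prod_ite_mul_pow (1 / 2 : ℝ) 1 0 s m
  have h2 (s : Finset (Fin 5)) := prod_ite_mul_pow (1 / 4 : ℝ) 1 0 s m
  have h3 (s : Finset (Fin 5)) := prod_ite_mul_pow (1 / 10 : ℝ) 6 1 s m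
  rw [show (1 / 10 * 6 : ℝ) = 3 / 5 by norm_num] at h3
  simp only [mul_one, mul_zero, hdeg] at h1 h2 h3
  simp only [Nat.reduceAdd, h1, h2, h3, ← mul_sum, hdeg]
  norm_num [Nat.factorial, Nat.choose] at hmom ⊢
  linear_combination (f.coeff m / 126000) * hmom
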